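/- Suppose ℓ is β-smooth (ℓ' is β-Lipschitz) and G-Lipschitz (|ℓ'| ≤ G). For any R ≥ 1 and any two parameter tuples W, V ∈ B(R), the gradients of the empirical risk satisfy ‖∇R(W) − ∇R(V)‖ ≤ 2L²R^{2L−2}(β+G) ‖W − V‖, where the norm on parameter tuples is the Euclidean norm on all concatenated entries (the square root of the sum of squared Frobenius norms of the layer-wise differences). In particular, R is 2L²R^{2L−2}(β+G)-smooth on B(R). -/

import Mathlib

/-!
The gradient with respect to layer `k` is the transpose of `B * (g * A)`, where
`B = W_{k-1} ⋯ W_0`, `A = W_{L-1} ⋯ W_{k+1}` is a single row (because `dim L = 1`) and `g` is the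
column `∇R(w_prod)`. Write `δ = ∑ k, ‖W_k - V_k‖_F`. Telescoping a product of matrices of
Frobenius norm at most `R` shows that each of the maps `B`, `A`, `w_prod` changes by at most
(a power of `R`) times `δ` between `W` and `V`. Since `‖g‖ ≤ G` (`norm_gradCol_le`) and `g` moves
by at most `β R^(L-1) δ` (`norm_gradCol_sub_le`), the layer gradient moves by at most
`(β + 2G) R^(2L-2) δ` (`gradLayer_sub_le`). By Cauchy–Schwarz `δ ≤ √L ‖W - V‖`, and summing the
squares over the `L` layers gives the factor `(β + 2G) L ≤ 2 L² (β + G)`.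

Only the Frobenius norm is needed, although the empty product `1` has Frobenius norm `√(dim 0)`:
the bottom products are always estimated after being applied to a further matrix, as in
`norm_prodUpTo_mul_le` and `norm_prodUpTo_sub_mul_le`.
-/

open Matrix Filter
open scoped BigOperators

noncomputable section

/-- Euclidean norm of a vector in `ℝ^m`. -/
def vecNorm {m : Type*} [Fintype m] (v : m → ℝ) : ℝ :=
  Real.sqrt (∑ i, (v i) ^ 2)

/-- Frobenius norm of a real matrix. -/
def frobNorm {m n : Type*} [Fintype m] [Fintype n] (M : Matrix m n ℝ) : ℝ :=
  Real.sqrt (∑ i, ∑ j, (M i j) ^ 2)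

/-- Spectral norm (operator 2-norm) of a real matrix. -/
def specNorm {m n : Type*} [Fintype m] [Fintype n] (M : Matrix m n ℝ) : ℝ :=
  sSup {c : ℝ | ∃ v : n → ℝ, vecNorm v = 1 ∧ c = vecNorm (M.mulVec v)}

/-- `(u, v)` is a top singular vector pair of `M`: both are unit vectors,
`M v = ‖M‖₂ u` and `Mᵀ u = ‖M‖₂ v`. -/
def IsTopSingularPair {m n : Type*} [Fintype m] [Fintype n]
    (M : Matrix m n ℝ) (u : m → ℝ) (v : n → ℝ) : Prop :=
  vecNorm u = 1 ∧ vecNorm v = 1 ∧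
    M.mulVec v = specNorm M • u ∧ Mᵀ.mulVec u = specNorm M • v

/-- Parameters of a deep linear network: layer `k` (0-indexed; paper layer `k+1`)
is a matrix mapping `ℝ^{dim k}` to `ℝ^{dim (k+1)}`. -/
abbrev Layers (dim : ℕ → ℕ) := ∀ j : ℕ, Matrix (Fin (dim (j+1))) (Fin (dim j)) ℝ

/-- Product `W_{j-1} ⋯ W_0` of the bottom `j` layers (paper: `W_j ⋯ W_1`). -/
def prodUpTo {dim : ℕ → ℕ} (W : Layers dim) : ∀ j : ℕ, Matrix (Fin (dim j)) (Fin (dim 0)) ℝ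
  | 0 => 1
  | (j+1) => W j * prodUpTo W j

/-- Product `W_{L-1} ⋯ W_j` of the layers from `j` up to the top layer `L-1`
(paper: `W_L ⋯ W_{j+1}`); for `j ≥ L` it is a pseudo-identity. -/
def prodFrom {dim : ℕ → ℕ} (L : ℕ) (W : Layers dim) (j : ℕ) :
    Matrix (Fin (dim L)) (Fin (dim j)) ℝ :=
  if h : j < L then prodFrom L W (j+1) * W j
  else Matrix.of fun i j' => if (i : ℕ) = (j' : ℕ) then 1 else 0
  termination_by L - j
  decreasing_by omega

/-- The linear predictor `w_prod = (W_L ⋯ W_1)ᵀ ∈ ℝ^d` induced by the network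
(recall `dim L = 1`). -/
def wprod {dim : ℕ → ℕ} (L : ℕ) (W : Layers dim) : Fin (dim 0) → ℝ :=
  fun j => ∑ a, prodUpTo W L a j

/-- Empirical risk of a linear predictor `w`: `R(w) = (1/n) ∑ᵢ ℓ(⟨w, zᵢ⟩)`. -/
def riskV {n d : ℕ} (ℓ : ℝ → ℝ) (z : Fin n → Fin d → ℝ) (w : Fin d → ℝ) : ℝ :=
  (n : ℝ)⁻¹ * ∑ i, ℓ (w ⬝ᵥ z i)

/-- Gradient of the risk w.r.t. the linear predictor: `∇R(w) = (1/n) ∑ᵢ ℓ'(⟨w, zᵢ⟩) zᵢ`. -/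
def gradRiskV {n d : ℕ} (ℓ' : ℝ → ℝ) (z : Fin n → Fin d → ℝ) (w : Fin d → ℝ) :
    Fin d → ℝ :=
  (n : ℝ)⁻¹ • ∑ i, ℓ' (w ⬝ᵥ z i) • z i

/-- The partial gradient of the empirical risk with respect to layer `k`:
`∂R/∂W_k = (W_L ⋯ W_{k+1})ᵀ ∇R(w_prod)ᵀ (W_{k-1} ⋯ W_1)ᵀ`. -/
def gradLayer {dim : ℕ → ℕ} (L : ℕ) (ℓ' : ℝ → ℝ) {n : ℕ}
    (z : Fin n → Fin (dim 0) → ℝ) (W : Layers dim) (k : ℕ) :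
    Matrix (Fin (dim (k+1))) (Fin (dim k)) ℝ :=
  (prodFrom L W (k+1))ᵀ *
    (Matrix.of fun (_ : Fin (dim L)) (j : Fin (dim 0)) => gradRiskV ℓ' z (wprod L W) j) *
    (prodUpTo W k)ᵀ

/-- Empirical risk of the network. -/
def riskW {dim : ℕ → ℕ} (L : ℕ) (ℓ : ℝ → ℝ) {n : ℕ}
    (z : Fin n → Fin (dim 0) → ℝ) (W : Layers dim) : ℝ :=
  riskV ℓ z (wprod L W)

/-- Gradient flow: `dW(t)/dt = −∇R(W(t))` for all `t ≥ 0`, entrywise on each layer. -/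
def IsGradientFlow {dim : ℕ → ℕ} (L : ℕ) (ℓ' : ℝ → ℝ) {n : ℕ}
    (z : Fin n → Fin (dim 0) → ℝ) (W : ℝ → Layers dim) : Prop :=
  ∀ t : ℝ, 0 ≤ t → ∀ k < L, ∀ i j,
    HasDerivAt (fun s => W s k i j) (-(gradLayer L ℓ' z (W t) k i j)) t

/-- The initialization-dependent constant `D`. -/
def Dconst {dim : ℕ → ℕ} (L : ℕ) (W0 : Layers dim) : ℝ :=
  (⨆ k : Fin L, frobNorm (W0 k) ^ 2) - frobNorm (W0 (L-1)) ^ 2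
    + ∑ k ∈ Finset.range (L-1),
        specNorm (W0 k * (W0 k)ᵀ - (W0 (k+1))ᵀ * W0 (k+1))

/-- Euclidean norm of a parameter tuple (all entries of the first `L` layers concatenated). -/
def paramNorm {dim : ℕ → ℕ} (L : ℕ) (V : Layers dim) : ℝ :=
  Real.sqrt (∑ k ∈ Finset.range L, frobNorm (V k) ^ 2)

/-- Squared Euclidean norm of the full gradient `∇R(W)`. -/
def gradNormSq {dim : ℕ → ℕ} (L : ℕ) (ℓ' : ℝ → ℝ) {n : ℕ}
    (z : Fin n → Fin (dim 0) → ℝ) (W : Layers dim) : ℝ :=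
  ∑ k ∈ Finset.range L, frobNorm (gradLayer L ℓ' z W k) ^ 2

/-- The data-dependent constant `α = min_{‖ξ‖=1, ξ ⟂ ū} max_{i ∈ S} ⟨ξ, zᵢ⟩`,
where `S` is the set of support vectors. -/
def alphaConst {n d : ℕ} (z : Fin n → Fin d → ℝ) (ubar : Fin d → ℝ) (γ : ℝ) : ℝ :=
  sInf {c : ℝ | ∃ ξ : Fin d → ℝ, vecNorm ξ = 1 ∧ ξ ⬝ᵥ ubar = 0 ∧
    c = sSup {r : ℝ | ∃ i : Fin n, ubar ⬝ᵥ z i = γ ∧ r = ξ ⬝ᵥ z i}}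

/-- Orthogonal projection onto the orthogonal complement of `span(ū)` (for `ū` a unit vector). -/
def projPerp {d : ℕ} (ubar : Fin d → ℝ) (w : Fin d → ℝ) : Fin d → ℝ :=
  w - (w ⬝ᵥ ubar) • ubar

section Frobenius

open scoped Matrix.Norms.Frobenius

theorem frobNorm_eq_norm {m n : Type*} [Fintype m] [Fintype n] (M : Matrix m n ℝ) :
    frobNorm M = ‖M‖ := by
  rw [frobNorm, Matrix.frobenius_norm_def, Real.sqrt_eq_rpow]
  simp

theorem abs_entry_le_norm {m n : Type*} [Fintype m] [Fintype n] (M : Matrix m n ℝ) (i : m)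
    (j : n) : |M i j| ≤ ‖M‖ := by
  rw [← frobNorm_eq_norm, frobNorm]
  apply Real.abs_le_sqrt
  refine (Finset.single_le_sum (f := fun j => M i j ^ 2) (fun _ _ => sq_nonneg _)
    (Finset.mem_univ j)).trans ?_
  exact Finset.single_le_sum (f := fun i => ∑ j, M i j ^ 2)
    (fun _ _ => Finset.sum_nonneg fun _ _ => sq_nonneg _) (Finset.mem_univ i)

/-! ### Bounds and telescoping for products of layers -/

theorem norm_prodUpTo_mul_le {dim : ℕ → ℕ} {p : Type*} [Fintype p] (W : Layers dim) (R : ℝ)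
    (hR : 1 ≤ R) (X : Matrix (Fin (dim 0)) p ℝ) (j : ℕ) (hW : ∀ k < j, ‖W k‖ ≤ R) :
    ‖prodUpTo W j * X‖ ≤ R ^ j * ‖X‖ := by
  induction j with
  | zero => simp [prodUpTo]
  | succ j ih =>
    have h := ih fun k hk => hW k (by omega)
    rw [prodUpTo, Matrix.mul_assoc]
    calc ‖W j * (prodUpTo W j * X)‖ ≤ ‖W j‖ * ‖prodUpTo W j * X‖ := Matrix.frobenius_norm_mul _ _
      _ ≤ R * (R ^ j * ‖X‖) := by
        gcongr
        exact hW j (by omega)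
      _ = R ^ (j + 1) * ‖X‖ := by ring

/-- Telescoping of the bottom product. The factor `R` on the left stands for the exponent `j - 1`
on the right, so that the case `j = 0` needs no natural-number subtraction. -/
theorem norm_prodUpTo_sub_mul_le {dim : ℕ → ℕ} {p : Type*} [Fintype p] (W V : Layers dim) (R : ℝ)
    (hR : 1 ≤ R) (X : Matrix (Fin (dim 0)) p ℝ) (j : ℕ) (hW : ∀ k < j, ‖W k‖ ≤ R)
    (hV : ∀ k < j, ‖V k‖ ≤ R) :
    R * ‖(prodUpTo W j - prodUpTo V j) * X‖ ≤
      R ^ j * (∑ k ∈ Finset.range j, ‖W k - V k‖) * ‖X‖ := by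
  induction j with
  | zero => simp [prodUpTo]
  | succ j ih =>
    have h := ih (fun k hk => hW k (by omega)) (fun k hk => hV k (by omega))
    have hP := norm_prodUpTo_mul_le V R hR X j (fun k hk => hV k (by omega))
    have e : (prodUpTo W (j+1) - prodUpTo V (j+1)) * X =
        W j * ((prodUpTo W j - prodUpTo V j) * X) + (W j - V j) * (prodUpTo V j * X) := by
      simp only [prodUpTo, Matrix.sub_mul, Matrix.mul_sub, Matrix.mul_assoc]
      abel
    rw [e, Finset.sum_range_succ]
    calc R * ‖_‖ ≤ R * (‖W j‖ * ‖(prodUpTo W j - prodUpTo V j) * X‖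
          + ‖W j - V j‖ * ‖prodUpTo V j * X‖) := by
          gcongr
          exact (norm_add_le _ _).trans
            (add_le_add (Matrix.frobenius_norm_mul _ _) (Matrix.frobenius_norm_mul _ _))
      _ ≤ R * (R * ‖(prodUpTo W j - prodUpTo V j) * X‖
          + ‖W j - V j‖ * (R ^ j * ‖X‖)) := by
          gcongr
          exact hW j (by omega)
      _ = R * (R * ‖(prodUpTo W j - prodUpTo V j) * X‖)
          + R ^ (j+1) * ‖W j - V j‖ * ‖X‖ := by ring
      _ ≤ R * (R ^ j * (∑ k ∈ Finset.range j, ‖W k - V k‖) * ‖X‖)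
          + R ^ (j+1) * ‖W j - V j‖ * ‖X‖ := by gcongr
      _ = _ := by ring

theorem prodFrom_of_lt {dim : ℕ → ℕ} (L : ℕ) (W : Layers dim) (j : ℕ) (h : j < L) :
    prodFrom L W j = prodFrom L W (j+1) * W j := by
  rw [prodFrom, dif_pos h]

theorem prodFrom_self {dim : ℕ → ℕ} (L : ℕ) (W : Layers dim) : prodFrom L W L = 1 := by
  rw [prodFrom, dif_neg (lt_irrefl _)]
  ext i j
  simp [Matrix.one_apply, Fin.ext_iff]

theorem norm_prodFrom_le {dim : ℕ → ℕ} (L : ℕ) (hdimL : dim L = 1) (W : Layers dim) (R : ℝ)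
    (hR : 1 ≤ R) (hW : ∀ k < L, ‖W k‖ ≤ R) (m : ℕ) :
    ∀ j, j + m = L → ‖prodFrom L W j‖ ≤ R ^ m := by
  induction m with
  | zero =>
    rintro j rfl
    rw [Nat.add_zero, prodFrom_self, ← frobNorm_eq_norm, frobNorm]
    have : Unique (Fin (dim j)) := (finCongr hdimL).unique
    simp
  | succ m ih =>
    intro j hj
    rw [prodFrom_of_lt L W j (by omega), pow_succ]
    refine (Matrix.frobenius_norm_mul _ _).trans ?_
    gcongr
    · exact ih _ (by omega)
    · exact hW _ (by omega)

/-- Telescoping of the top product. The exponent `m` is one larger than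
necessary when `m > 0`, which the final bound can afford since `R ≥ 1`. -/
theorem norm_prodFrom_sub_le {dim : ℕ → ℕ} (L : ℕ) (hdimL : dim L = 1) (W V : Layers dim) (R : ℝ)
    (hR : 1 ≤ R) (hW : ∀ k < L, ‖W k‖ ≤ R) (hV : ∀ k < L, ‖V k‖ ≤ R) (m : ℕ) :
    ∀ j, j + m = L → ‖prodFrom L W j - prodFrom L V j‖ ≤
      R ^ m * ∑ k ∈ Finset.Ico j L, ‖W k - V k‖ := by
  induction m with
  | zero =>
    rintro j rfl
    simp [prodFrom_self]
  | succ m ih =>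
    intro j hj
    have h := ih (j+1) (by omega)
    have hP := norm_prodFrom_le L hdimL V R hR hV m (j+1) (by omega)
    rw [prodFrom_of_lt L W j (by omega), prodFrom_of_lt L V j (by omega),
      Finset.sum_eq_sum_Ico_succ_bot (by omega)]
    have e : prodFrom L W (j+1) * W j - prodFrom L V (j+1) * V j =
        (prodFrom L W (j+1) - prodFrom L V (j+1)) * W j + prodFrom L V (j+1) * (W j - V j) := by
      simp only [Matrix.sub_mul, Matrix.mul_sub]
      abel
    rw [e]
    calc ‖_‖ ≤ ‖prodFrom L W (j+1) - prodFrom L V (j+1)‖ * ‖W j‖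
          + ‖prodFrom L V (j+1)‖ * ‖W j - V j‖ :=
          (norm_add_le _ _).trans
            (add_le_add (Matrix.frobenius_norm_mul _ _) (Matrix.frobenius_norm_mul _ _))
      _ ≤ (R ^ m * ∑ k ∈ Finset.Ico (j+1) L, ‖W k - V k‖) * R + R ^ m * ‖W j - V j‖ := by
          gcongr
          exact hW j (by omega)
      _ ≤ (R ^ m * ∑ k ∈ Finset.Ico (j+1) L, ‖W k - V k‖) * R + R ^ (m+1) * ‖W j - V j‖ := by
          gcongr
          omega
      _ = _ := by ring

/-! ### The gradient with respect to the linear predictor -/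

/-- A vector regarded as a matrix with all columns equal to it; it is used with the one-element
column index `Fin (dim L)`, where it is a column matrix. -/
def colMat {d : ℕ} (q : ℕ) (v : Fin d → ℝ) : Matrix (Fin d) (Fin q) ℝ :=
  Matrix.of fun j _ => v j

theorem norm_colMat {d q : ℕ} (hq : q = 1) (v : Fin d → ℝ) : ‖colMat q v‖ = vecNorm v := by
  subst hq
  rw [← frobNorm_eq_norm, frobNorm, vecNorm]
  simp [colMat]

theorem colMat_gradRiskV {n d q : ℕ} (ℓ' : ℝ → ℝ) (z : Fin n → Fin d → ℝ) (w : Fin d → ℝ) :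
    colMat q (gradRiskV ℓ' z w) = (n : ℝ)⁻¹ • ∑ i, ℓ' (w ⬝ᵥ z i) • colMat q (z i) := by
  ext a b
  simp [colMat, gradRiskV, Matrix.sum_apply]

/-- An average of scalar multiples of vectors in the unit ball is bounded by any common bound for
the scalars. -/
theorem norm_average_le {E : Type*} [NormedAddCommGroup E] [NormedSpace ℝ E] {n : ℕ} (hn : 0 < n)
    (c : Fin n → ℝ) (Z : Fin n → E) (C : ℝ) (hc : ∀ i, |c i| ≤ C) (hZ : ∀ i, ‖Z i‖ ≤ 1) :
    ‖(n : ℝ)⁻¹ • ∑ i, c i • Z i‖ ≤ C := by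
  have h : ‖∑ i, c i • Z i‖ ≤ n * C := by
    refine (norm_sum_le _ _).trans ?_
    have : ∀ i ∈ Finset.univ, ‖c i • Z i‖ ≤ C := fun i _ => by
      rw [norm_smul, Real.norm_eq_abs]
      nlinarith [hc i, hZ i, abs_nonneg (c i), norm_nonneg (Z i)]
    simpa using Finset.sum_le_card_nsmul _ _ _ this
  rw [norm_smul, norm_inv, Real.norm_natCast]
  have : (0:ℝ) < n := by exact_mod_cast hn
  rwa [inv_mul_le_iff₀ this]

theorem norm_gradCol_le {n d q : ℕ} (hn : 0 < n) (hq : q = 1) (z : Fin n → Fin d → ℝ)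
    (hz : ∀ i, vecNorm (z i) ≤ 1) (ℓ' : ℝ → ℝ) (G : ℝ) (hG : ∀ a, |ℓ' a| ≤ G) (w : Fin d → ℝ) :
    ‖colMat q (gradRiskV ℓ' z w)‖ ≤ G := by
  rw [colMat_gradRiskV]
  exact norm_average_le hn _ _ _ (fun _ => hG _) fun i => (norm_colMat hq _).trans_le (hz i)

theorem wprod_dotProduct {dim : ℕ → ℕ} (L : ℕ) (hdimL : dim L = 1) (W : Layers dim)
    (v : Fin (dim 0) → ℝ) (a : Fin (dim L)) :
    wprod L W ⬝ᵥ v = (prodUpTo W L * colMat (dim L) v) a a := by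
  have : Unique (Fin (dim L)) := (finCongr hdimL).unique
  simp only [wprod, dotProduct, Matrix.mul_apply, colMat, Matrix.of_apply]
  exact Finset.sum_congr rfl fun j _ => by rw [Fintype.sum_subsingleton _ a]

/-- The number `⟨w_prod, z_i⟩` is an entry of the bottom product applied to the column `z_i`, so the
telescoping estimate controls its variation, and `ℓ'` is `β`-Lipschitz. -/
theorem norm_gradCol_sub_le {dim : ℕ → ℕ} {n : ℕ} (M : ℕ) (hn : 0 < n) (hdimL : dim (M+1) = 1)
    (z : Fin n → Fin (dim 0) → ℝ) (hz : ∀ i, vecNorm (z i) ≤ 1) (ℓ' : ℝ → ℝ) (β : ℝ) (h0 : 0 ≤ β)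
    (hβ : ∀ a b : ℝ, |ℓ' a - ℓ' b| ≤ β * |a - b|) (R : ℝ) (hR : 1 ≤ R) (W V : Layers dim)
    (hW : ∀ k < M+1, ‖W k‖ ≤ R) (hV : ∀ k < M+1, ‖V k‖ ≤ R) :
    ‖colMat (dim (M+1)) (gradRiskV ℓ' z (wprod (M+1) W)) -
        colMat (dim (M+1)) (gradRiskV ℓ' z (wprod (M+1) V))‖ ≤
      β * (R ^ M * ∑ k ∈ Finset.range (M+1), ‖W k - V k‖) := by
  simp only [colMat_gradRiskV]
  rw [← smul_sub, ← Finset.sum_sub_distrib]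
  simp only [← sub_smul]
  refine norm_average_le hn _ _ _ (fun i => ?_) fun i => (norm_colMat hdimL _).trans_le (hz i)
  refine (hβ _ _).trans ?_
  gcongr
  have a : Fin (dim (M+1)) := ⟨0, by omega⟩
  rw [wprod_dotProduct _ hdimL W _ a, wprod_dotProduct _ hdimL V _ a, ← Matrix.sub_apply,
    ← Matrix.sub_mul]
  refine (abs_entry_le_norm _ _ _).trans ?_
  have h := norm_prodUpTo_sub_mul_le W V R hR (colMat (dim (M+1)) (z i)) (M+1) hW hV
  have h1 : ‖colMat (dim (M+1)) (z i)‖ ≤ 1 := (norm_colMat hdimL _).trans_le (hz i)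
  have h2 : R ^ (M+1) * (∑ k ∈ Finset.range (M+1), ‖W k - V k‖) *
      ‖colMat (dim (M+1)) (z i)‖ ≤ R ^ (M+1) * (∑ k ∈ Finset.range (M+1), ‖W k - V k‖) :=
    mul_le_of_le_one_right (by positivity) h1
  refine le_of_mul_le_mul_left ((h.trans h2).trans_eq ?_) (by linarith : 0 < R)
  ring

/-! ### The gradient with respect to one layer -/

theorem gradLayer_eq {dim : ℕ → ℕ} (L : ℕ) (ℓ' : ℝ → ℝ) {n : ℕ}
    (z : Fin n → Fin (dim 0) → ℝ) (W : Layers dim) (k : ℕ) :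
    gradLayer L ℓ' z W k = (prodUpTo W k *
      (colMat (dim L) (gradRiskV ℓ' z (wprod L W)) * prodFrom L W (k+1)))ᵀ := by
  rw [Matrix.transpose_mul, Matrix.transpose_mul]
  rfl

/-- The three terms `t1`, `t2`, `t3` change one of the factors of `B * (g * A)` at a time. -/
theorem gradLayer_sub_le {dim : ℕ → ℕ} {n : ℕ} (M : ℕ) (hn : 0 < n) (hdimL : dim (M+1) = 1)
    (z : Fin n → Fin (dim 0) → ℝ) (hz : ∀ i, vecNorm (z i) ≤ 1) (ℓ' : ℝ → ℝ) (β G : ℝ)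
    (h0 : 0 ≤ β) (hβ : ∀ a b : ℝ, |ℓ' a - ℓ' b| ≤ β * |a - b|) (hG : ∀ a : ℝ, |ℓ' a| ≤ G)
    (R : ℝ) (hR : 1 ≤ R) (W V : Layers dim)
    (hW : ∀ k < M+1, frobNorm (W k) ≤ R) (hV : ∀ k < M+1, frobNorm (V k) ≤ R)
    (k : ℕ) (hk : k < M+1) :
    frobNorm (gradLayer (M+1) ℓ' z W k - gradLayer (M+1) ℓ' z V k) ≤
      (β + 2 * G) * R ^ (2 * M) * ∑ k ∈ Finset.range (M+1), frobNorm (W k - V k) := by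
  simp only [frobNorm_eq_norm] at *
  have hG0 : 0 ≤ G := (abs_nonneg _).trans (hG 0)
  set δ := ∑ k ∈ Finset.range (M+1), ‖W k - V k‖ with hδ
  have hδ0 : 0 ≤ δ := Finset.sum_nonneg fun _ _ => norm_nonneg _
  obtain ⟨m, rfl⟩ : ∃ m, M = k + m := ⟨M - k, by omega⟩
  rw [gradLayer_eq, gradLayer_eq, ← Matrix.transpose_sub, Matrix.frobenius_norm_transpose]
  have hgV := norm_gradCol_le hn hdimL z hz ℓ' G hG (wprod (k+m+1) V)
  have hgW := norm_gradCol_le hn hdimL z hz ℓ' G hG (wprod (k+m+1) W)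
  have hgd := norm_gradCol_sub_le (k+m) hn hdimL z hz ℓ' β h0 hβ R hR W V hW hV
  rw [← hδ] at hgd
  set gW := colMat (dim (k+m+1)) (gradRiskV ℓ' z (wprod (k+m+1) W))
  set gV := colMat (dim (k+m+1)) (gradRiskV ℓ' z (wprod (k+m+1) V))
  have hAW := norm_prodFrom_le (k+m+1) hdimL W R hR hW m (k+1) (by omega)
  have hAd := norm_prodFrom_sub_le (k+m+1) hdimL W V R hR hW hV m (k+1) (by omega)
  have hsub : ∑ k ∈ Finset.Ico (k+1) (k+m+1), ‖W k - V k‖ ≤ δ :=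
    Finset.sum_le_sum_of_subset_of_nonneg
      (fun i hi => by simp only [Finset.mem_Ico, Finset.mem_range] at *; omega)
      fun _ _ _ => norm_nonneg _
  have hsub' : ∑ k ∈ Finset.range k, ‖W k - V k‖ ≤ δ :=
    Finset.sum_le_sum_of_subset_of_nonneg
      (fun i hi => by simp only [Finset.mem_range] at *; omega)
      fun _ _ _ => norm_nonneg _
  set AW := prodFrom (k+m+1) W (k+1)
  set AV := prodFrom (k+m+1) V (k+1)
  have e : prodUpTo W k * (gW * AW) - prodUpTo V k * (gV * AV) =
      (prodUpTo W k - prodUpTo V k) * (gW * AW) + prodUpTo V k * ((gW - gV) * AW)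
        + prodUpTo V k * (gV * (AW - AV)) := by
    simp only [Matrix.sub_mul, Matrix.mul_sub]
    abel
  have hp : R ^ (k+m) ≤ R ^ (2*(k+m)) := pow_le_pow_right₀ hR (by omega)
  have t1 : ‖(prodUpTo W k - prodUpTo V k) * (gW * AW)‖ ≤ G * R ^ (2*(k+m)) * δ := by
    have h := norm_prodUpTo_sub_mul_le W V R hR (gW * AW) k
      (fun i hi => hW i (by omega)) (fun i hi => hV i (by omega))
    calc _ ≤ R * ‖(prodUpTo W k - prodUpTo V k) * (gW * AW)‖ :=
          le_mul_of_one_le_left (norm_nonneg _) hR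
      _ ≤ R ^ k * (∑ k ∈ Finset.range k, ‖W k - V k‖) * ‖gW * AW‖ := h
      _ ≤ R ^ k * δ * (G * R ^ m) := by
          gcongr
          exact (Matrix.frobenius_norm_mul _ _).trans (by gcongr)
      _ = G * R ^ (k+m) * δ := by ring
      _ ≤ _ := by gcongr
  have t2 : ‖prodUpTo V k * ((gW - gV) * AW)‖ ≤ β * R ^ (2*(k+m)) * δ := by
    calc _ ≤ R ^ k * ‖(gW - gV) * AW‖ :=
          norm_prodUpTo_mul_le V R hR _ k (fun i hi => hV i (by omega))
      _ ≤ R ^ k * ((β * (R ^ (k+m) * δ)) * R ^ m) := by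
          gcongr
          exact (Matrix.frobenius_norm_mul _ _).trans (by gcongr)
      _ = _ := by ring
  have t3 : ‖prodUpTo V k * (gV * (AW - AV))‖ ≤ G * R ^ (2*(k+m)) * δ := by
    calc _ ≤ R ^ k * ‖gV * (AW - AV)‖ :=
          norm_prodUpTo_mul_le V R hR _ k (fun i hi => hV i (by omega))
      _ ≤ R ^ k * (G * (R ^ m * δ)) := by
          gcongr
          refine (Matrix.frobenius_norm_mul _ _).trans ?_
          gcongr
          exact hAd.trans (by gcongr)
      _ = G * R ^ (k+m) * δ := by ring
      _ ≤ _ := by gcongr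
  rw [e]
  refine (norm_add₃_le).trans ?_
  linarith

end Frobenius

/-! ### Passage to the parameter norm -/

theorem vecNorm_sign_smul {m : Type*} [Fintype m] (c : ℝ) (hc : c = 1 ∨ c = -1) (v : m → ℝ) :
    vecNorm (c • v) = vecNorm v := by
  rcases hc with rfl | rfl <;> simp [vecNorm]

theorem sum_le_sqrt_mul_paramNorm {dim : ℕ → ℕ} (L : ℕ) (V : Layers dim) :
    ∑ k ∈ Finset.range L, frobNorm (V k) ≤ √L * paramNorm L V := by
  rw [paramNorm, ← Real.sqrt_mul (Nat.cast_nonneg L)]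
  apply Real.le_sqrt_of_sq_le
  simpa using sq_sum_le_card_mul_sum_sq (s := Finset.range L) (f := fun k => frobNorm (V k))

theorem paramNorm_le_of_forall {dim : ℕ → ℕ} (L : ℕ) (V : Layers dim) (C : ℝ) (hC : 0 ≤ C)
    (h : ∀ k < L, frobNorm (V k) ≤ C) : paramNorm L V ≤ √L * C := by
  rw [paramNorm, ← Real.sqrt_sq hC, ← Real.sqrt_mul (Nat.cast_nonneg L)]
  apply Real.sqrt_le_sqrt
  have : ∀ k ∈ Finset.range L, frobNorm (V k) ^ 2 ≤ C ^ 2 := fun k hk =>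
    pow_le_pow_left₀ (Real.sqrt_nonneg _) (h k (Finset.mem_range.1 hk)) 2
  simpa using Finset.sum_le_card_nsmul _ _ _ this

theorem stmt13
    (dim : ℕ → ℕ) (L n : ℕ) (hL : 1 ≤ L) (hdimL : dim L = 1) (hn : 0 < n)
    (x : Fin n → Fin (dim 0) → ℝ) (y : Fin n → ℝ) (z : Fin n → Fin (dim 0) → ℝ)
    (hx : ∀ i, vecNorm (x i) ≤ 1) (hy : ∀ i, y i = 1 ∨ y i = -1)
    (hz : ∀ i, z i = y i • x i)
    (ℓ ℓ' : ℝ → ℝ) (hderiv : ∀ s : ℝ, HasDerivAt ℓ (ℓ' s) s) (hcont : Continuous ℓ')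
    (β G : ℝ) (hβ : ∀ a b : ℝ, |ℓ' a - ℓ' b| ≤ β * |a - b|) (hG : ∀ a : ℝ, |ℓ' a| ≤ G)
    :
    ∀ R : ℝ, 1 ≤ R → ∀ W V : Layers dim,
      (∀ k < L, frobNorm (W k) ≤ R) → (∀ k < L, frobNorm (V k) ≤ R) →
      paramNorm L (fun k => gradLayer L ℓ' z W k - gradLayer L ℓ' z V k)
        ≤ 2 * (L : ℝ)^2 * R^(2*L-2) * (β + G) * paramNorm L (fun k => W k - V k) := by
  intro R hR W V hW hV
  obtain ⟨M, rfl⟩ : ∃ M, L = M + 1 := ⟨L - 1, by omega⟩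
  have hz1 : ∀ i, vecNorm (z i) ≤ 1 := fun i => by
    rw [hz i, vecNorm_sign_smul _ (hy i)]
    exact hx i
  have hβ0 : 0 ≤ β := by
    have h := hβ 1 0
    rw [sub_zero, abs_one, mul_one] at h
    exact (abs_nonneg _).trans h
  have hG0 : 0 ≤ G := (abs_nonneg _).trans (hG 0)
  set Δ := paramNorm (M+1) (fun k => W k - V k)
  have hΔ : 0 ≤ Δ := Real.sqrt_nonneg _
  have hδ : ∑ k ∈ Finset.range (M+1), frobNorm (W k - V k) ≤ √((M+1 : ℕ) : ℝ) * Δ :=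
    sum_le_sqrt_mul_paramNorm (M+1) (fun k => W k - V k)
  have hlayer : ∀ k < M+1, frobNorm (gradLayer (M+1) ℓ' z W k - gradLayer (M+1) ℓ' z V k) ≤
      (β + 2 * G) * R ^ (2 * M) * (√((M+1 : ℕ) : ℝ) * Δ) := fun k hk =>
    (gradLayer_sub_le M hn hdimL z hz1 ℓ' β G hβ0 hβ hG R hR W V hW hV k hk).trans (by gcongr)
  have hmain := paramNorm_le_of_forall (M+1)
    (fun k => gradLayer (M+1) ℓ' z W k - gradLayer (M+1) ℓ' z V k) _ (by positivity) hlayer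
  have hs : √((M+1 : ℕ) : ℝ) * √((M+1 : ℕ) : ℝ) = ((M+1 : ℕ) : ℝ) :=
    Real.mul_self_sqrt (Nat.cast_nonneg _)
  have h1 : (1:ℝ) ≤ ((M+1 : ℕ) : ℝ) := by exact_mod_cast hL
  rw [show 2 * (M+1) - 2 = 2 * M by omega]
  calc _ ≤ _ := hmain
    _ = (√((M+1 : ℕ) : ℝ) * √((M+1 : ℕ) : ℝ)) * (β + 2 * G) * R ^ (2 * M) * Δ := by ring
    _ = ((M+1 : ℕ) : ℝ) * (β + 2 * G) * R ^ (2 * M) * Δ := by rw [hs]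
    _ ≤ ((M+1 : ℕ) : ℝ) ^ 2 * (2 * (β + G)) * R ^ (2 * M) * Δ := by
      gcongr
      · exact le_self_pow₀ h1 two_ne_zero
      · linarith
    _ = _ := by ring

end
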